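/- arXiv:1506.05349 — 2 statements merged into one kernel-verified Lean document; each statement's English description precedes it below -/
import Mathlib

section
/- Let n be a positive integer and let M and N be real 2n×2n matrices in the split orthogonal group O(n,n). Then the sign of det((MN)₁₁) equals the product of the signs of det(M₁₁) and det(N₁₁), and the sign of det((MN)₂₂) equals the product of the signs of det(M₂₂) and det(N₂₂); equivalently, det((MN)₁₁) · det(M₁₁) · det(N₁₁) > 0 and det((MN)₂₂) · det(M₂₂) · det(N₂₂) > 0. -/
open Matrix

/-- The metric `η = diag(I_n, -I_n)` as a `2n × 2n` real matrix. -/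
noncomputable def splitMetric (n : ℕ) : Matrix (Fin n ⊕ Fin n) (Fin n ⊕ Fin n) ℝ :=
  Matrix.fromBlocks 1 0 0 (-1)

/-!
The matrices that map the cone `{(u, w) | |w|² < |u|²}` into itself form a monoid `S`. The
upper-left block of an element of `S` is nonsingular: if it killed `u ≠ 0`, then `(u, 0)` would
leave the cone. Since `diag(1, t)` lies in `S` for `0 ≤ t ≤ 1`, so does `M * diag(1, t) * N` for
`M, N ∈ S`, and the determinant of its upper-left block has constant sign. At `t = 0` this
block is `M₁₁ * N₁₁`, at `t = 1` it is `(M * N)₁₁`. The lower-right blocks follow by exchanging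
the two summands of the index type.
-/

open LieAlgebra.Orthogonal Set

theorem mul_pos_of_isPreconnected_of_ne_zero {α R : Type*} [TopologicalSpace α] [Ring R]
    [LinearOrder R] [IsStrictOrderedRing R] [TopologicalSpace R] [OrderClosedTopology R]
    {s : Set α} (hs : IsPreconnected s) {f : α → R} (hf : ContinuousOn f s)
    (hf₀ : ∀ x ∈ s, f x ≠ 0) {a b : α} (ha : a ∈ s) (hb : b ∈ s) : 0 < f a * f b := by
  by_contra! hle
  obtain ⟨x, hx, hfx⟩ : 0 ∈ f '' s := by
    rcases mul_nonpos_iff.mp hle with ⟨hfa, hfb⟩ | ⟨hfa, hfb⟩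
    · exact hs.intermediate_value hb ha hf ⟨hfb, hfa⟩
    · exact hs.intermediate_value ha hb hf ⟨hfa, hfb⟩
  exact hf₀ x hx hfx

theorem submatrix_swap_mul {p q R : Type*} [Fintype p] [Fintype q] [Mul R] [AddCommMonoid R]
    (M N : Matrix (p ⊕ q) (p ⊕ q) R) :
    (M * N).submatrix Sum.swap Sum.swap =
      M.submatrix Sum.swap Sum.swap * N.submatrix Sum.swap Sum.swap :=
  (submatrix_mul_equiv M N Sum.swap (Equiv.sumComm q p) Sum.swap).symm

section IndefiniteDiagonal

variable {p q R : Type*} [DecidableEq p] [DecidableEq q] [CommRing R]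

theorem indefiniteDiagonal_eq_fromBlocks :
    indefiniteDiagonal p q R = fromBlocks 1 0 0 (-1) := by
  simp [indefiniteDiagonal, ← fromBlocks_diagonal, ← diagonal_one]

theorem indefiniteDiagonal_submatrix_swap :
    (indefiniteDiagonal p q R).submatrix Sum.swap Sum.swap = -indefiniteDiagonal q p R := by
  simp [indefiniteDiagonal_eq_fromBlocks, fromBlocks_neg]

theorem transpose_mul_indefiniteDiagonal_mul_submatrix_swap [Fintype p] [Fintype q]
    {M : Matrix (p ⊕ q) (p ⊕ q) R}
    (hM : Mᵀ * indefiniteDiagonal p q R * M = indefiniteDiagonal p q R) :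
    (M.submatrix Sum.swap Sum.swap)ᵀ * indefiniteDiagonal q p R * M.submatrix Sum.swap Sum.swap =
      indefiniteDiagonal q p R := by
  have h := congrArg (submatrix · Sum.swap Sum.swap) hM
  simpa only [submatrix_swap_mul, indefiniteDiagonal_submatrix_swap, transpose_submatrix,
    Matrix.mul_neg, Matrix.neg_mul, neg_inj] using h

end IndefiniteDiagonal

section PositiveCone

variable {p q : Type*} [Fintype p] [Fintype q] [DecidableEq p] [DecidableEq q]

variable (p q) in
/-- The cone of vectors on which the quadratic form of signature `(p, q)` is positive. -/
def positiveCone : Set (p ⊕ q → ℝ) :=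
  {x | 0 < x ⬝ᵥ indefiniteDiagonal p q ℝ *ᵥ x}

variable (p q) in
/-- The monoid of matrices that map the positive cone into itself. It contains the indefinite
orthogonal group `O(p, q)`, but also singular matrices such as `diag(1, 0)`. -/
def positiveConeSubmonoid : Submonoid (Matrix (p ⊕ q) (p ⊕ q) ℝ) where
  carrier := {M | MapsTo (M *ᵥ ·) (positiveCone p q) (positiveCone p q)}
  one_mem' x hx := by simpa only [one_mulVec] using hx
  mul_mem' {M N} hM hN x hx := by simpa only [mulVec_mulVec] using hM (hN hx)

theorem sumElim_mem_positiveCone {u : p → ℝ} {w : q → ℝ} :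
    u ⊕ᵥ w ∈ positiveCone p q ↔ w ⬝ᵥ w < u ⬝ᵥ u := by
  simp [positiveCone, indefiniteDiagonal_eq_fromBlocks, fromBlocks_mulVec, neg_mulVec]

theorem mem_positiveConeSubmonoid_of_transpose_mul_mul {M : Matrix (p ⊕ q) (p ⊕ q) ℝ}
    (hM : Mᵀ * indefiniteDiagonal p q ℝ * M = indefiniteDiagonal p q ℝ) :
    M ∈ positiveConeSubmonoid p q := by
  intro x (hx : 0 < x ⬝ᵥ indefiniteDiagonal p q ℝ *ᵥ x)
  rwa [← hM, ← mulVec_mulVec, ← mulVec_mulVec, dotProduct_mulVec, vecMul_transpose] at hx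

theorem fromBlocks_one_smul_one_mem_positiveConeSubmonoid {t : ℝ} (ht : |t| ≤ 1) :
    fromBlocks 1 0 0 (t • 1) ∈ positiveConeSubmonoid p q := by
  intro x hx
  obtain ⟨u, w, rfl⟩ : ∃ u w, x = u ⊕ᵥ w := ⟨_, _, (Sum.elim_comp_inl_inr x).symm⟩
  have hw : 0 ≤ w ⬝ᵥ w := dotProduct_self_star_nonneg w
  have image_eq : fromBlocks 1 0 0 (t • 1) *ᵥ (u ⊕ᵥ w) = u ⊕ᵥ t • w := by
    simp [fromBlocks_mulVec, smul_mulVec]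
  change _ *ᵥ _ ∈ positiveCone p q
  rw [image_eq, sumElim_mem_positiveCone]
  calc (t • w) ⬝ᵥ (t • w) = t ^ 2 * (w ⬝ᵥ w) := by simp [pow_two, mul_assoc]
    _ ≤ w ⬝ᵥ w := mul_le_of_le_one_left hw ((sq_le_one_iff_abs_le_one t).mpr ht)
    _ < u ⬝ᵥ u := sumElim_mem_positiveCone.mp hx

namespace positiveConeSubmonoid

theorem det_toBlocks₁₁_ne_zero {M : Matrix (p ⊕ q) (p ⊕ q) ℝ}
    (hM : M ∈ positiveConeSubmonoid p q) : M.toBlocks₁₁.det ≠ 0 := by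
  intro hdet
  obtain ⟨u, hu, hker⟩ := exists_mulVec_eq_zero_iff.mpr hdet
  have mem_cone : u ⊕ᵥ (0 : q → ℝ) ∈ positiveCone p q := by
    rw [sumElim_mem_positiveCone, zero_dotProduct]
    exact dotProduct_self_star_pos_iff.mpr hu
  have image_eq : M *ᵥ (u ⊕ᵥ 0) = (0 : p → ℝ) ⊕ᵥ M.toBlocks₂₁ *ᵥ u := by
    conv_lhs => rw [← fromBlocks_toBlocks M]
    simp [fromBlocks_mulVec, hker]
  have image_mem : (0 : p → ℝ) ⊕ᵥ M.toBlocks₂₁ *ᵥ u ∈ positiveCone p q :=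
    image_eq ▸ hM mem_cone
  rw [sumElim_mem_positiveCone, zero_dotProduct] at image_mem
  exact image_mem.not_ge (dotProduct_self_star_nonneg _)

theorem det_toBlocks₁₁_mul_pos {M N : Matrix (p ⊕ q) (p ⊕ q) ℝ}
    (hM : M ∈ positiveConeSubmonoid p q) (hN : N ∈ positiveConeSubmonoid p q) :
    0 < (M * N).toBlocks₁₁.det * M.toBlocks₁₁.det * N.toBlocks₁₁.det := by
  let X (t : ℝ) : Matrix (p ⊕ q) (p ⊕ q) ℝ := M * fromBlocks 1 0 0 (t • 1) * N
  have X_zero : (X 0).toBlocks₁₁ = M.toBlocks₁₁ * N.toBlocks₁₁ := by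
    simp only [X]
    rw [← fromBlocks_toBlocks M, ← fromBlocks_toBlocks N]
    simp [fromBlocks_multiply]
  have X_one : X 1 = M * N := by simp [X]
  have continuous_det : Continuous fun t ↦ (X t).toBlocks₁₁.det := by
    unfold X toBlocks₁₁
    fun_prop
  have det_ne_zero (t : ℝ) (ht : t ∈ Icc 0 1) : (X t).toBlocks₁₁.det ≠ 0 := by
    have ht_abs : |t| ≤ 1 := (abs_of_nonneg ht.1).trans_le ht.2
    exact det_toBlocks₁₁_ne_zero
      (mul_mem (mul_mem hM (fromBlocks_one_smul_one_mem_positiveConeSubmonoid ht_abs)) hN)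
  have hpos := mul_pos_of_isPreconnected_of_ne_zero isPreconnected_Icc continuous_det.continuousOn
    det_ne_zero (right_mem_Icc.mpr zero_le_one) (left_mem_Icc.mpr zero_le_one)
  rwa [X_zero, X_one, det_mul, ← mul_assoc] at hpos

end positiveConeSubmonoid

theorem det_toBlocks₁₁_mul_pos_of_transpose_mul_mul {M N : Matrix (p ⊕ q) (p ⊕ q) ℝ}
    (hM : Mᵀ * indefiniteDiagonal p q ℝ * M = indefiniteDiagonal p q ℝ)
    (hN : Nᵀ * indefiniteDiagonal p q ℝ * N = indefiniteDiagonal p q ℝ) :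
    0 < (M * N).toBlocks₁₁.det * M.toBlocks₁₁.det * N.toBlocks₁₁.det :=
  positiveConeSubmonoid.det_toBlocks₁₁_mul_pos (mem_positiveConeSubmonoid_of_transpose_mul_mul hM)
    (mem_positiveConeSubmonoid_of_transpose_mul_mul hN)

theorem sign_det_blocks_mul_general {M N : Matrix (p ⊕ q) (p ⊕ q) ℝ}
    (hM : Mᵀ * indefiniteDiagonal p q ℝ * M = indefiniteDiagonal p q ℝ)
    (hN : Nᵀ * indefiniteDiagonal p q ℝ * N = indefiniteDiagonal p q ℝ) :
    0 < (M * N).toBlocks₁₁.det * M.toBlocks₁₁.det * N.toBlocks₁₁.det ∧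
      0 < (M * N).toBlocks₂₂.det * M.toBlocks₂₂.det * N.toBlocks₂₂.det := by
  refine ⟨det_toBlocks₁₁_mul_pos_of_transpose_mul_mul hM hN, ?_⟩
  have swapped_pos := det_toBlocks₁₁_mul_pos_of_transpose_mul_mul
    (transpose_mul_indefiniteDiagonal_mul_submatrix_swap hM)
    (transpose_mul_indefiniteDiagonal_mul_submatrix_swap hN)
  -- The upper-left block of `A.submatrix Sum.swap Sum.swap` is definitionally `A.toBlocks₂₂`.
  rwa [← submatrix_swap_mul] at swapped_pos

end PositiveCone

theorem sign_det_blocks_mul (n : ℕ) (hn : 0 < n)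
    (M N : Matrix (Fin n ⊕ Fin n) (Fin n ⊕ Fin n) ℝ)
    (hM : Mᵀ * splitMetric n * M = splitMetric n)
    (hN : Nᵀ * splitMetric n * N = splitMetric n) :
    0 < (M * N).toBlocks₁₁.det * M.toBlocks₁₁.det * N.toBlocks₁₁.det ∧
      0 < (M * N).toBlocks₂₂.det * M.toBlocks₂₂.det * N.toBlocks₂₂.det := by
  rw [splitMetric, ← indefiniteDiagonal_eq_fromBlocks] at hM hN
  exact sign_det_blocks_mul_general hM hN
end

section
/- Let n be a positive integer and let M₁, …, M_m be real 2n×2n matrices, each lying in the split orthogonal group O(n,n), and each lying either in O⁺⁺(n,n) (both block determinants positive) or in O⁻⁻(n,n) (both block determinants negative). Let k be the number of factors lying in O⁻⁻(n,n). Then (−1)^k · det(I + M_m · M_{m−1} ⋯ M₁) ≥ 0. -/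
open Matrix

/-!
If `|Q v| ≤ |P v|` for all `v` and `P` is invertible, then `P + t Q` is invertible for `|t| < 1`,
so `det P` and `det (P + Q)` cannot have opposite signs. This is used twice for matrices
`M = [A, B; C, D]` in `O(p, q)`, whose block `D` is always invertible.

* For a product `M * M'`, the bottom-right block is `D (D' + D⁻¹ C B')`, and `D⁻¹ C B'` is
  dominated by `D'` because `D⁻¹ C` is a contraction and `|B' v| ≤ |D' v|`. Hence the sign of
  `det D` is multiplicative.
* The matrices `P = [1, 0; C, D]` and `Q = [A, B; 0, 1]` satisfy `|P v| = |Q v|`, `det P = det D`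
  and `P + Q = 1 + M`. Hence `det D * det (1 + M) ≥ 0`.
-/

open Finset LieAlgebra.Orthogonal SignType

section Domination

variable {ι K : Type*} [Fintype ι]

theorem dotProduct_self_nonneg [Ring K] [LinearOrder K] [IsStrictOrderedRing K] (v : ι → K) :
    0 ≤ v ⬝ᵥ v :=
  Fintype.sum_nonneg fun i => mul_self_nonneg (v i)

variable [DecidableEq ι]

theorem det_add_smul_ne_zero_of_dotProduct_self_mulVec_le
    [CommRing K] [LinearOrder K] [IsStrictOrderedRing K] {P Q : Matrix ι ι K} (hP : P.det ≠ 0)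
    (hQP : ∀ v, Q *ᵥ v ⬝ᵥ Q *ᵥ v ≤ P *ᵥ v ⬝ᵥ P *ᵥ v) {t : K} (ht : |t| < 1) :
    (P + t • Q).det ≠ 0 := by
  rw [Ne, ← exists_mulVec_eq_zero_iff]
  rintro ⟨v, hv, hker⟩
  have hPv : P *ᵥ v = -(t • Q *ᵥ v) := by
    rwa [add_mulVec, smul_mulVec, add_eq_zero_iff_eq_neg] at hker
  have hle : P *ᵥ v ⬝ᵥ P *ᵥ v ≤ t ^ 2 * (P *ᵥ v ⬝ᵥ P *ᵥ v) :=
    calc P *ᵥ v ⬝ᵥ P *ᵥ v = t ^ 2 * (Q *ᵥ v ⬝ᵥ Q *ᵥ v) := by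
          rw [hPv, neg_dotProduct_neg, smul_dotProduct, dotProduct_smul, smul_eq_mul,
            smul_eq_mul, ← mul_assoc, sq]
      _ ≤ t ^ 2 * (P *ᵥ v ⬝ᵥ P *ᵥ v) := mul_le_mul_of_nonneg_left (hQP v) (sq_nonneg t)
  have hPv_zero : P *ᵥ v ⬝ᵥ P *ᵥ v = 0 := by
    nlinarith [dotProduct_self_nonneg (P *ᵥ v), (sq_lt_one_iff_abs_lt_one t).mpr ht]
  exact hv (eq_zero_of_mulVec_eq_zero hP (dotProduct_self_eq_zero.mp hPv_zero))

theorem det_mul_det_add_nonneg_of_dotProduct_self_mulVec_le {P Q : Matrix ι ι ℝ}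
    (hQP : ∀ v, Q *ᵥ v ⬝ᵥ Q *ᵥ v ≤ P *ᵥ v ⬝ᵥ P *ᵥ v) :
    0 ≤ P.det * (P + Q).det := by
  by_contra! hneg
  have hP : P.det ≠ 0 := left_ne_zero_of_mul hneg.ne
  let f : ℝ → ℝ := fun t => P.det * (P + t • Q).det
  have hf : Continuous f := by fun_prop
  have hf_zero : 0 ≤ f 0 := by simpa [f] using mul_self_nonneg P.det
  have hf_one : f 1 < 0 := by simpa [f] using hneg
  obtain ⟨t, ⟨ht₀, ht₁⟩, hft⟩ : 0 ∈ f '' Set.Ico 0 1 :=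
    intermediate_value_Ico' zero_le_one hf.continuousOn ⟨hf_one, hf_zero⟩
  have hdet := det_add_smul_ne_zero_of_dotProduct_self_mulVec_le hP hQP
    (abs_lt.mpr ⟨by linarith, ht₁⟩)
  exact mul_ne_zero hP hdet hft

end Domination

theorem sign_eq_sign_of_mul_pos {K : Type*} [Ring K] [LinearOrder K] [IsStrictOrderedRing K]
    {x y : K} (h : 0 < x * y) : sign x = sign y := by
  rcases mul_pos_iff.mp h with ⟨hx, hy⟩ | ⟨hx, hy⟩
  · rw [sign_pos hx, sign_pos hy]
  · rw [sign_neg hx, sign_neg hy]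

theorem prod_sign_eq_neg_one_pow_card_filter {ι K : Type*} [Zero K] [LinearOrder K]
    {s : Finset ι} {f : ι → K} (hf : ∀ i ∈ s, f i ≠ 0) :
    ∏ i ∈ s, sign (f i) = (-1) ^ #{i ∈ s | f i < 0} := by
  rw [← prod_const, prod_filter]
  refine prod_congr rfl fun i hi => ?_
  rcases (hf i hi).lt_or_gt with hneg | hpos
  · rw [if_pos hneg, sign_neg hneg]
  · rw [if_neg hpos.not_gt, sign_pos hpos]

theorem toBlocks₂₂_mul_of_isUnit_det {p q R : Type*} [Fintype p] [Fintype q] [DecidableEq q]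
    [CommRing R] {M : Matrix (p ⊕ q) (p ⊕ q) R} (hM : IsUnit M.toBlocks₂₂.det)
    (N : Matrix (p ⊕ q) (p ⊕ q) R) :
    (M * N).toBlocks₂₂ =
      M.toBlocks₂₂ * (N.toBlocks₂₂ + M.toBlocks₂₂⁻¹ * M.toBlocks₂₁ * N.toBlocks₁₂) := by
  conv_lhs => rw [← fromBlocks_toBlocks M, ← fromBlocks_toBlocks N, fromBlocks_multiply]
  rw [toBlocks_fromBlocks₂₂, Matrix.mul_add, Matrix.mul_assoc _⁻¹,
    mul_nonsing_inv_cancel_left _ _ hM, add_comm]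

variable {p q : Type*} [Fintype p] [Fintype q] [DecidableEq p] [DecidableEq q]

/-- The indefinite orthogonal group `O(p, q)` over `R`: the matrices preserving
`diag(1, …, 1, -1, …, -1)`. As for `Matrix.symplecticGroup`, it is encoded as a submonoid of the
matrix ring. -/
def indefiniteOrthogonalGroup (p q R : Type*) [Fintype p] [Fintype q] [DecidableEq p]
    [DecidableEq q] [CommRing R] : Submonoid (Matrix (p ⊕ q) (p ⊕ q) R) where
  carrier := {M | Mᵀ * indefiniteDiagonal p q R * M = indefiniteDiagonal p q R}
  one_mem' := by simp
  mul_mem' {M N} hM hN := by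
    calc (M * N)ᵀ * indefiniteDiagonal p q R * (M * N)
        = Nᵀ * (Mᵀ * indefiniteDiagonal p q R * M) * N := by
          simp only [transpose_mul, Matrix.mul_assoc]
      _ = indefiniteDiagonal p q R := by rw [hM, hN]

namespace indefiniteOrthogonalGroup

section CommRing

variable {R : Type*} [CommRing R]

theorem dotProduct_indefiniteDiagonal_mulVec (a : p → R) (b : q → R) :
    Sum.elim a b ⬝ᵥ indefiniteDiagonal p q R *ᵥ Sum.elim a b = a ⬝ᵥ a - b ⬝ᵥ b := by
  simp [indefiniteDiagonal, dotProduct, mulVec_diagonal, sub_eq_add_neg]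

theorem dotProduct_self_mulVec_sub {M : Matrix (p ⊕ q) (p ⊕ q) R}
    (hM : M ∈ indefiniteOrthogonalGroup p q R) (a : p → R) (b : q → R) :
    (M.toBlocks₁₁ *ᵥ a + M.toBlocks₁₂ *ᵥ b) ⬝ᵥ (M.toBlocks₁₁ *ᵥ a + M.toBlocks₁₂ *ᵥ b) -
      (M.toBlocks₂₁ *ᵥ a + M.toBlocks₂₂ *ᵥ b) ⬝ᵥ (M.toBlocks₂₁ *ᵥ a + M.toBlocks₂₂ *ᵥ b) =
    a ⬝ᵥ a - b ⬝ᵥ b := by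
  have hMv : M *ᵥ Sum.elim a b = Sum.elim (M.toBlocks₁₁ *ᵥ a + M.toBlocks₁₂ *ᵥ b)
      (M.toBlocks₂₁ *ᵥ a + M.toBlocks₂₂ *ᵥ b) := by
    conv_lhs => rw [← fromBlocks_toBlocks M, fromBlocks_mulVec]
    simp only [Sum.elim_comp_inl, Sum.elim_comp_inr]
  calc _ = M *ᵥ Sum.elim a b ⬝ᵥ indefiniteDiagonal p q R *ᵥ M *ᵥ Sum.elim a b := by
        rw [hMv, dotProduct_indefiniteDiagonal_mulVec]
    _ = Sum.elim a b ⬝ᵥ (Mᵀ * indefiniteDiagonal p q R * M) *ᵥ Sum.elim a b := by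
        rw [← mulVec_mulVec, ← mulVec_mulVec, dotProduct_mulVec _ Mᵀ, vecMul_transpose]
    _ = a ⬝ᵥ a - b ⬝ᵥ b := by rw [hM, dotProduct_indefiniteDiagonal_mulVec]

theorem dotProduct_self_toBlocks₂₂_mulVec {M : Matrix (p ⊕ q) (p ⊕ q) R}
    (hM : M ∈ indefiniteOrthogonalGroup p q R) (b : q → R) :
    M.toBlocks₂₂ *ᵥ b ⬝ᵥ M.toBlocks₂₂ *ᵥ b =
      b ⬝ᵥ b + M.toBlocks₁₂ *ᵥ b ⬝ᵥ M.toBlocks₁₂ *ᵥ b := by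
  have h := dotProduct_self_mulVec_sub hM 0 b
  simp only [mulVec_zero, zero_add, dotProduct_zero, zero_sub] at h
  linear_combination -h

end CommRing

section LinearOrder

variable {K : Type*} [CommRing K] [LinearOrder K] [IsStrictOrderedRing K]
  {M : Matrix (p ⊕ q) (p ⊕ q) K}

theorem det_toBlocks₂₂_ne_zero (hM : M ∈ indefiniteOrthogonalGroup p q K) :
    M.toBlocks₂₂.det ≠ 0 := by
  rw [Ne, ← exists_mulVec_eq_zero_iff]
  rintro ⟨b, hb, hker⟩
  have hsum := dotProduct_self_toBlocks₂₂_mulVec hM b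
  rw [hker, dotProduct_zero] at hsum
  refine hb (dotProduct_self_eq_zero.mp ?_)
  linarith [dotProduct_self_nonneg b, dotProduct_self_nonneg (M.toBlocks₁₂ *ᵥ b)]

theorem dotProduct_self_toBlocks₁₂_mulVec_le (hM : M ∈ indefiniteOrthogonalGroup p q K)
    (b : q → K) :
    M.toBlocks₁₂ *ᵥ b ⬝ᵥ M.toBlocks₁₂ *ᵥ b ≤ M.toBlocks₂₂ *ᵥ b ⬝ᵥ M.toBlocks₂₂ *ᵥ b := by
  rw [dotProduct_self_toBlocks₂₂_mulVec hM]
  exact le_add_of_nonneg_left (dotProduct_self_nonneg b)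

end LinearOrder

section Field

variable {K : Type*} [Field K] [LinearOrder K] [IsStrictOrderedRing K]
  {M : Matrix (p ⊕ q) (p ⊕ q) K}

-- With `b = D⁻¹ C a`, the vector `M (a, -b)` has second component `0`, so its form `|a|² - |b|²`
-- is nonnegative.
theorem dotProduct_self_inv_toBlocks₂₂_mul_toBlocks₂₁_mulVec_le
    (hM : M ∈ indefiniteOrthogonalGroup p q K) (a : p → K) :
    (M.toBlocks₂₂⁻¹ * M.toBlocks₂₁) *ᵥ a ⬝ᵥ (M.toBlocks₂₂⁻¹ * M.toBlocks₂₁) *ᵥ a ≤ a ⬝ᵥ a := by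
  set b := (M.toBlocks₂₂⁻¹ * M.toBlocks₂₁) *ᵥ a with hb
  have hcancel : M.toBlocks₂₁ *ᵥ a + M.toBlocks₂₂ *ᵥ (-b) = 0 := by
    rw [hb, mulVec_neg, mulVec_mulVec,
      mul_nonsing_inv_cancel_left _ _ (det_toBlocks₂₂_ne_zero hM).isUnit, add_neg_cancel]
  have hform := dotProduct_self_mulVec_sub hM a (-b)
  rw [hcancel, dotProduct_zero, sub_zero, neg_dotProduct_neg] at hform
  exact sub_nonneg.mp (hform ▸ dotProduct_self_nonneg _)

end Field

section Real

variable {M N : Matrix (p ⊕ q) (p ⊕ q) ℝ}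

theorem det_toBlocks₂₂_mul_mul_nonneg (hM : M ∈ indefiniteOrthogonalGroup p q ℝ)
    (hN : N ∈ indefiniteOrthogonalGroup p q ℝ) :
    0 ≤ M.toBlocks₂₂.det * N.toBlocks₂₂.det * (M * N).toBlocks₂₂.det := by
  set X := M.toBlocks₂₂⁻¹ * M.toBlocks₂₁ * N.toBlocks₁₂ with hX
  have hdominated (v : q → ℝ) :
      X *ᵥ v ⬝ᵥ X *ᵥ v ≤ N.toBlocks₂₂ *ᵥ v ⬝ᵥ N.toBlocks₂₂ *ᵥ v := by
    rw [hX, ← mulVec_mulVec]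
    exact (dotProduct_self_inv_toBlocks₂₂_mul_toBlocks₂₁_mulVec_le hM _).trans
      (dotProduct_self_toBlocks₁₂_mulVec_le hN v)
  calc 0 ≤ M.toBlocks₂₂.det ^ 2 * (N.toBlocks₂₂.det * (N.toBlocks₂₂ + X).det) :=
        mul_nonneg (sq_nonneg _)
          (det_mul_det_add_nonneg_of_dotProduct_self_mulVec_le hdominated)
    _ = M.toBlocks₂₂.det * N.toBlocks₂₂.det * (M * N).toBlocks₂₂.det := by
        rw [toBlocks₂₂_mul_of_isUnit_det (det_toBlocks₂₂_ne_zero hM).isUnit, det_mul]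
        ring

theorem sign_det_toBlocks₂₂_mul (hM : M ∈ indefiniteOrthogonalGroup p q ℝ)
    (hN : N ∈ indefiniteOrthogonalGroup p q ℝ) :
    sign (M * N).toBlocks₂₂.det = sign M.toBlocks₂₂.det * sign N.toBlocks₂₂.det := by
  rw [← sign_mul]
  refine (sign_eq_sign_of_mul_pos ?_).symm
  refine (det_toBlocks₂₂_mul_mul_nonneg hM hN).lt_of_ne' (mul_ne_zero (mul_ne_zero ?_ ?_) ?_)
  exacts [det_toBlocks₂₂_ne_zero hM, det_toBlocks₂₂_ne_zero hN,
    det_toBlocks₂₂_ne_zero (mul_mem hM hN)]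

/-- The homomorphism `O(p, q) → {-1, 0, 1}` sending a matrix to the sign of the determinant of its
bottom-right block, which records whether the matrix preserves the orientation of the
negative-definite directions. The value `0` is never attained. -/
noncomputable def negOrientation : indefiniteOrthogonalGroup p q ℝ →* SignType where
  toFun M := sign (M : Matrix (p ⊕ q) (p ⊕ q) ℝ).toBlocks₂₂.det
  map_one' := by
    rw [OneMemClass.coe_one, ← fromBlocks_one, toBlocks_fromBlocks₂₂, det_one, sign_one]
  map_mul' M N := sign_det_toBlocks₂₂_mul M.2 N.2

theorem negOrientation_apply (M : indefiniteOrthogonalGroup p q ℝ) :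
    negOrientation M = sign (M : Matrix (p ⊕ q) (p ⊕ q) ℝ).toBlocks₂₂.det :=
  rfl

theorem negOrientation_prod_ofFn {m : ℕ} (M : Fin m → indefiniteOrthogonalGroup p q ℝ) :
    negOrientation (List.ofFn M).prod =
      (-1) ^ #{i | (M i : Matrix (p ⊕ q) (p ⊕ q) ℝ).toBlocks₂₂.det < 0} := by
  rw [map_list_prod, List.map_ofFn, List.prod_ofFn]
  exact prod_sign_eq_neg_one_pow_card_filter fun i _ => det_toBlocks₂₂_ne_zero (M i).2

theorem det_toBlocks₂₂_mul_det_one_add_nonneg (hM : M ∈ indefiniteOrthogonalGroup p q ℝ) :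
    0 ≤ M.toBlocks₂₂.det * (1 + M).det := by
  let P : Matrix (p ⊕ q) (p ⊕ q) ℝ := fromBlocks 1 0 M.toBlocks₂₁ M.toBlocks₂₂
  let Q : Matrix (p ⊕ q) (p ⊕ q) ℝ := fromBlocks M.toBlocks₁₁ M.toBlocks₁₂ 0 1
  have hdet : P.det = M.toBlocks₂₂.det := by simp [P]
  have hadd : P + Q = 1 + M := by
    conv_rhs => rw [← fromBlocks_toBlocks M, ← fromBlocks_one, fromBlocks_add]
    simp [P, Q, fromBlocks_add, add_comm]
  have hnorm (v : p ⊕ q → ℝ) : Q *ᵥ v ⬝ᵥ Q *ᵥ v = P *ᵥ v ⬝ᵥ P *ᵥ v := by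
    have hform := dotProduct_self_mulVec_sub hM (v ∘ Sum.inl) (v ∘ Sum.inr)
    simp only [P, Q, fromBlocks_mulVec, sumElim_dotProduct_sumElim, one_mulVec, zero_mulVec,
      add_zero, zero_add]
    linear_combination hform
  rw [← hdet, ← hadd]
  exact det_mul_det_add_nonneg_of_dotProduct_self_mulVec_le fun v => (hnorm v).le

end Real

end indefiniteOrthogonalGroup

theorem splitMetric_eq_indefiniteDiagonal (n : ℕ) :
    splitMetric n = indefiniteDiagonal (Fin n) (Fin n) ℝ := by
  rw [splitMetric, indefiniteDiagonal, ← fromBlocks_diagonal, diagonal_one, ← diagonal_neg,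
    diagonal_one]

open indefiniteOrthogonalGroup in
theorem det_one_add_prod_sign_general {m : ℕ} (M : Fin m → Matrix (p ⊕ q) (p ⊕ q) ℝ)
    (hM : ∀ i, M i ∈ indefiniteOrthogonalGroup p q ℝ) :
    0 ≤ (-1 : ℝ) ^ #{i | (M i).toBlocks₂₂.det < 0} * (1 + (List.ofFn M).prod).det := by
  lift M to Fin m → indefiniteOrthogonalGroup p q ℝ using hM
  set N := (List.ofFn M).prod with hN
  have hcoe : (List.ofFn fun i => (M i : Matrix (p ⊕ q) (p ⊕ q) ℝ)).prod = N := by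
    rw [hN, Submonoid.coe_list_prod, List.map_ofFn]
    rfl
  have hsign := negOrientation_prod_ofFn M
  have hdet := sign_nonneg_iff.mpr (det_toBlocks₂₂_mul_det_one_add_nonneg N.2)
  rw [sign_mul, ← negOrientation_apply, hN, hsign] at hdet
  rw [hcoe, ← sign_nonneg_iff, sign_mul, sign_pow, sign_neg neg_one_lt_zero]
  exact hdet

theorem det_one_add_prod_sign (n : ℕ) (hn : 0 < n) (m : ℕ)
    (M : Fin m → Matrix (Fin n ⊕ Fin n) (Fin n ⊕ Fin n) ℝ)
    (hM : ∀ i, (M i)ᵀ * splitMetric n * M i = splitMetric n)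
    (hcomp : ∀ i, (0 < (M i).toBlocks₁₁.det ∧ 0 < (M i).toBlocks₂₂.det) ∨
      ((M i).toBlocks₁₁.det < 0 ∧ (M i).toBlocks₂₂.det < 0)) :
    0 ≤ (-1 : ℝ) ^ (Finset.univ.filter fun i => (M i).toBlocks₁₁.det < 0).card *
      (1 + (List.ofFn fun i => M i).prod).det := by
  have hsame (i) : (M i).toBlocks₁₁.det < 0 ↔ (M i).toBlocks₂₂.det < 0 := by grind
  simp only [splitMetric_eq_indefiniteDiagonal] at hM
  simpa only [hsame] using det_one_add_prod_sign_general M hM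
end
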